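/- Let X be a real normed linear space and let x, y ∈ X be nonzero. If p ≥ 0, then (max{‖x‖,‖y‖})^p·α[x,y] − |‖x‖^p − ‖y‖^p| ≤ α_p[x,y] ≤ (min{‖x‖,‖y‖})^p·α[x,y] + |‖x‖^p − ‖y‖^p|. If p < 0, then (min{‖x‖,‖y‖})^p·α[x,y] − |‖x‖^p − ‖y‖^p| ≤ α_p[x,y] ≤ (max{‖x‖,‖y‖})^p·α[x,y] + |‖x‖^p − ‖y‖^p|. -/

import Mathlib

noncomputable def alphaD {X : Type*} [NormedAddCommGroup X] [NormedSpace ℝ X]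
    (p : ℝ) (x y : X) : ℝ :=
  ‖(‖x‖ ^ (p - 1)) • x - (‖y‖ ^ (p - 1)) • y‖

noncomputable def angularD {X : Type*} [NormedAddCommGroup X] [NormedSpace ℝ X]
    (x y : X) : ℝ :=
  ‖‖x‖⁻¹ • x - ‖y‖⁻¹ • y‖

theorem pAngular_aux
    {X : Type*} [NormedAddCommGroup X] [NormedSpace ℝ X]
    (x y : X) (hx : x ≠ 0) (hy : y ≠ 0) (p c : ℝ) (hc : c = ‖x‖ ∨ c = ‖y‖) :
    c ^ p * angularD x y - |‖x‖ ^ p - ‖y‖ ^ p| ≤ alphaD p x y ∧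
      alphaD p x y ≤ c ^ p * angularD x y + |‖x‖ ^ p - ‖y‖ ^ p| := by
  have hx0 : 0 < ‖x‖ := norm_pos_iff.mpr hx
  have hy0 : 0 < ‖y‖ := norm_pos_iff.mpr hy
  have hc0 : 0 < c := by rcases hc with h | h <;> rw [h] <;> assumption
  have hu : ‖‖x‖⁻¹ • x‖ = 1 := by
    rw [norm_smul, norm_inv, norm_norm, inv_mul_cancel₀ hx0.ne']
  have hv : ‖‖y‖⁻¹ • y‖ = 1 := by
    rw [norm_smul, norm_inv, norm_norm, inv_mul_cancel₀ hy0.ne']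
  have hα : alphaD p x y = ‖‖x‖ ^ p • (‖x‖⁻¹ • x) - ‖y‖ ^ p • (‖y‖⁻¹ • y)‖ := by
    rw [alphaD, Real.rpow_sub_one hx0.ne', Real.rpow_sub_one hy0.ne', smul_smul, smul_smul,
      div_eq_mul_inv, div_eq_mul_inv]
  have hβ : c ^ p * angularD x y = ‖c ^ p • (‖x‖⁻¹ • x - ‖y‖⁻¹ • y)‖ := by
    rw [norm_smul, angularD, Real.norm_of_nonneg (Real.rpow_nonneg hc0.le p)]
  rw [hα, hβ]
  generalize ‖x‖⁻¹ • x = u at *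
  generalize ‖y‖⁻¹ • y = v at *
  have key : |‖‖x‖ ^ p • u - ‖y‖ ^ p • v‖ - ‖c ^ p • (u - v)‖| ≤ |‖x‖ ^ p - ‖y‖ ^ p| := by
    refine (abs_norm_sub_norm_le _ _).trans ?_
    rcases hc with h | h
    · have e : ‖x‖ ^ p • u - ‖y‖ ^ p • v - c ^ p • (u - v) = (‖x‖ ^ p - ‖y‖ ^ p) • v := by
        rw [h]; module
      rw [e, norm_smul, hv, mul_one, Real.norm_eq_abs]
    · have e : ‖x‖ ^ p • u - ‖y‖ ^ p • v - c ^ p • (u - v) = (‖x‖ ^ p - ‖y‖ ^ p) • u := by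
        rw [h]; module
      rw [e, norm_smul, hu, mul_one, Real.norm_eq_abs]
  have := abs_le.mp key
  constructor <;> linarith [this.1, this.2]

theorem pAngular_vs_angular_bounds
    {X : Type*} [NormedAddCommGroup X] [NormedSpace ℝ X]
    (x y : X) (hx : x ≠ 0) (hy : y ≠ 0) (p : ℝ) :
    (0 ≤ p →
      (max ‖x‖ ‖y‖) ^ p * angularD x y - |‖x‖ ^ p - ‖y‖ ^ p| ≤ alphaD p x y ∧
      alphaD p x y ≤ (min ‖x‖ ‖y‖) ^ p * angularD x y + |‖x‖ ^ p - ‖y‖ ^ p|) ∧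
    (p < 0 →
      (min ‖x‖ ‖y‖) ^ p * angularD x y - |‖x‖ ^ p - ‖y‖ ^ p| ≤ alphaD p x y ∧
      alphaD p x y ≤ (max ‖x‖ ‖y‖) ^ p * angularD x y + |‖x‖ ^ p - ‖y‖ ^ p|) := by
  have hmax := pAngular_aux x y hx hy p (max ‖x‖ ‖y‖) (max_choice _ _)
  have hmin := pAngular_aux x y hx hy p (min ‖x‖ ‖y‖) (min_choice _ _)
  exact ⟨fun _ => ⟨hmax.1, hmin.2⟩, fun _ => ⟨hmin.1, hmax.2⟩⟩
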